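/- Let p > 1 and a, b, L > 0. A real number λ is a Dirichlet eigenvalue of −Δ^{a,b}_p on (0,L), i.e. λ ∈ Λ^{a,b}_p(0,L), if and only if there exists a positive integer k such that λ = k^p · λ^{a,b}_{1,p}(0,L). In particular Λ^{a,b}_p(0,L) = ((a+b)/2)^p · Λ^{1,1}_p(0,L). -/

import Mathlib

open Set

/-- `u` is C¹ on `[α, γ]` with derivative `u'` there. -/
def C1On (α γ : ℝ) (u u' : ℝ → ℝ) : Prop :=
  (∀ t ∈ Set.Icc α γ, HasDerivWithinAt u (u' t) (Set.Icc α γ) t) ∧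
  ContinuousOn u' (Set.Icc α γ)

/-- Admissible functions on `[0, L]`: C¹ with zero boundary values. -/
def Adm (L : ℝ) (u u' : ℝ → ℝ) : Prop :=
  C1On 0 L u u' ∧ u 0 = 0 ∧ u L = 0

/-- The asymmetric energy integrand `a^p (s⁺)^p + b^p (s⁻)^p`. -/
noncomputable def asymE (p a b s : ℝ) : ℝ :=
  a ^ p * (max s 0) ^ p + b ^ p * (max (-s) 0) ^ p

/-- The asymmetric flux `a^p (s⁺)^(p-1) - b^p (s⁻)^(p-1)`. -/
noncomputable def asymFlux (p a b s : ℝ) : ℝ :=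
  a ^ p * (max s 0) ^ (p - 1) - b ^ p * (max (-s) 0) ^ (p - 1)

/-- The first Dirichlet eigenvalue `λ^{a,b}_{1,p}(0,L)`, as the infimum of the
asymmetric energy over normalized admissible functions. -/
noncomputable def lam1 (p a b L : ℝ) : ℝ :=
  sInf { E : ℝ | ∃ u u' : ℝ → ℝ, Adm L u u' ∧
    (∫ t in (0:ℝ)..L, |u t| ^ p) = 1 ∧
    E = ∫ t in (0:ℝ)..L, asymE p a b (u' t) }

/-- `u` (a C¹ function on `[0,L]` with derivative `u'` and zero boundary values)
is a weak solution of `-Δ^{a,b}_p u = g` on `(0,L)`. -/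
def IsWeakSol (p a b L : ℝ) (u u' g : ℝ → ℝ) : Prop :=
  Adm L u u' ∧
  ∀ φ φ' : ℝ → ℝ, Adm L φ φ' →
    (∫ t in (0:ℝ)..L, asymFlux p a b (u' t) * φ' t) =
      ∫ t in (0:ℝ)..L, g t * φ t

/-- `lam` is a Dirichlet eigenvalue of `-Δ^{a,b}_p` on `(0,L)`. -/
def DirichletEig (p a b L lam : ℝ) : Prop :=
  ∃ u u' : ℝ → ℝ, IsWeakSol p a b L u u'
      (fun t => lam * |u t| ^ (p - 2) * u t) ∧
    ∃ t ∈ Set.Icc (0:ℝ) L, u t ≠ 0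

/-!
The energy `(p - 1) * asymE p a b u' + lam * |u| ^ p` of a solution is conserved, so with
`lam = (p - 1) * κ ^ p` a positive wave rises to its maximum as a generalized sine of frequency
`κ / a`, in time `a * (π_p / 2) / κ`, and falls as the mirror image of one of frequency `κ / b`.
After each zero the negative of a solution solves the problem with `a` and `b` swapped, whence all
zeros are equally spaced, with the spacing `(a + b) * (π_p / 2) / κ` symmetric in `a` and `b`: an
interval of length `L` carries a nontrivial solution exactly when `L` is a positive integer
multiple of it. The smallest such `κ` gives `lam1`: a positive solution `v` on a slightly longer
interval has a logarithmic derivative whose flux satisfies a Riccati equation, and Picone's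
argument, Young's inequality applied to the derivative of `asymFlux p a b (v' / v) * |u| ^ p`,
bounds the energy of every admissible `u` from below.
-/

section Flux

variable {p q a b : ℝ}

lemma asymE_neg (p a b s : ℝ) : asymE p a b (-s) = asymE p b a s := by
  simp only [asymE, neg_neg, add_comm]

lemma asymFlux_neg (p a b s : ℝ) : asymFlux p a b (-s) = -asymFlux p b a s := by
  simp only [asymFlux, neg_neg, neg_sub]

lemma asymE_of_nonneg (hp : p ≠ 0) {s : ℝ} (hs : 0 ≤ s) : asymE p a b s = a ^ p * s ^ p := by
  rw [asymE, max_eq_left hs, max_eq_right (neg_nonpos.2 hs), Real.zero_rpow hp, mul_zero, add_zero]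

lemma asymFlux_of_nonneg (hp : p ≠ 1) {s : ℝ} (hs : 0 ≤ s) :
    asymFlux p a b s = a ^ p * s ^ (p - 1) := by
  rw [asymFlux, max_eq_left hs, max_eq_right (neg_nonpos.2 hs),
    Real.zero_rpow (sub_ne_zero.2 hp), mul_zero, sub_zero]

lemma asymE_zero (hp : p ≠ 0) : asymE p a b 0 = 0 := by
  rw [asymE_of_nonneg hp le_rfl, Real.zero_rpow hp, mul_zero]

lemma asymFlux_zero (hp : p ≠ 1) : asymFlux p a b 0 = 0 := by
  rw [asymFlux_of_nonneg hp le_rfl, Real.zero_rpow (sub_ne_zero.2 hp), mul_zero]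

lemma asymE_one_one (hp : p ≠ 0) (s : ℝ) : asymE p 1 1 s = |s| ^ p := by
  rcases le_total 0 s with hs | hs
  · rw [asymE_of_nonneg hp hs, abs_of_nonneg hs, Real.one_rpow, one_mul]
  · rw [← neg_neg s, asymE_neg, asymE_of_nonneg hp (neg_nonneg.2 hs), neg_neg, abs_of_nonpos hs,
      Real.one_rpow, one_mul]

lemma asymE_const_mul (p a b : ℝ) {c : ℝ} (hc : 0 ≤ c) (s : ℝ) :
    asymE p a b (c * s) = c ^ p * asymE p a b s := by
  have max_mul (x : ℝ) : max (c * x) 0 = c * max x 0 := by rw [mul_max_of_nonneg _ _ hc, mul_zero]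
  rw [asymE, asymE, ← mul_neg, max_mul, max_mul, Real.mul_rpow hc (le_max_right _ _),
    Real.mul_rpow hc (le_max_right _ _)]
  ring

lemma asymFlux_const_mul (p a b : ℝ) {c : ℝ} (hc : 0 ≤ c) (s : ℝ) :
    asymFlux p a b (c * s) = c ^ (p - 1) * asymFlux p a b s := by
  have max_mul (x : ℝ) : max (c * x) 0 = c * max x 0 := by rw [mul_max_of_nonneg _ _ hc, mul_zero]
  rw [asymFlux, asymFlux, ← mul_neg, max_mul, max_mul, Real.mul_rpow hc (le_max_right _ _),
    Real.mul_rpow hc (le_max_right _ _)]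
  ring

lemma asymFlux_mul_self (hp : 1 < p) (s : ℝ) : asymFlux p a b s * s = asymE p a b s := by
  wlog hs : 0 ≤ s generalizing a b s
  · have h := this (a := b) (b := a) (-s) (by linarith)
    rwa [asymFlux_neg, asymE_neg, neg_mul_neg] at h
  have hp0 : p ≠ 0 := by positivity
  rw [asymFlux_of_nonneg hp.ne' hs, asymE_of_nonneg hp0 hs, mul_assoc]
  nth_rewrite 2 [← Real.rpow_one s]
  rw [← Real.rpow_add' hs (by simpa using hp0), sub_add_cancel]

lemma asymFlux_one_one (hp : 1 < p) (s : ℝ) : asymFlux p 1 1 s = |s| ^ (p - 2) * s := by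
  wlog hs : 0 ≤ s generalizing s
  · have h := this (-s) (by linarith)
    rwa [asymFlux_neg, abs_neg, mul_neg, neg_inj] at h
  rw [asymFlux_of_nonneg hp.ne' hs, abs_of_nonneg hs, Real.one_rpow, one_mul]
  nth_rewrite 3 [← Real.rpow_one s]
  rw [← Real.rpow_add' hs (by linarith)]
  ring_nf

lemma hasDerivAt_max_zero_rpow (hp : 1 < p) (s : ℝ) :
    HasDerivAt (fun s : ℝ => max s 0 ^ p) (p * max s 0 ^ (p - 1)) s := by
  have max_rpow_continuous {r : ℝ} (hr : 0 ≤ r) : Continuous fun s : ℝ => max s 0 ^ r :=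
    (continuous_id.max continuous_const).rpow_const fun _ => .inr hr
  have of_ne_zero (y : ℝ) (hy : y ≠ 0) :
      HasDerivAt (fun s : ℝ => max s 0 ^ p) (p * max y 0 ^ (p - 1)) y := by
    rcases hy.lt_or_gt with hy_neg | hy_pos
    · rw [max_eq_right hy_neg.le, Real.zero_rpow (by linarith), mul_zero]
      refine (hasDerivAt_const y (0 : ℝ)).congr_of_eventuallyEq ?_
      filter_upwards [Iio_mem_nhds hy_neg] with z hz
      rw [max_eq_right (le_of_lt hz), Real.zero_rpow (by linarith)]
    · rw [max_eq_left hy_pos.le]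
      refine (Real.hasDerivAt_rpow_const (.inl hy)).congr_of_eventuallyEq ?_
      filter_upwards [Ioi_mem_nhds hy_pos] with z hz
      rw [max_eq_left (le_of_lt hz)]
  rcases eq_or_ne s 0 with rfl | hs
  · exact hasDerivAt_of_hasDerivAt_of_ne of_ne_zero
      (max_rpow_continuous (by linarith)).continuousAt
      (continuous_const.mul (max_rpow_continuous (by linarith))).continuousAt
  · exact of_ne_zero s hs

lemma hasDerivAt_asymE (hp : 1 < p) (a b s : ℝ) :
    HasDerivAt (asymE p a b) (p * asymFlux p a b s) s := by
  have h_pos := (hasDerivAt_max_zero_rpow hp s).const_mul (a ^ p)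
  have h_neg := ((hasDerivAt_max_zero_rpow hp (-s)).comp s (hasDerivAt_neg s)).const_mul (b ^ p)
  refine (h_pos.add h_neg).congr_deriv ?_
  rw [asymFlux]
  ring

lemma continuous_asymE (hp : 1 < p) (a b : ℝ) : Continuous (asymE p a b) :=
  continuous_iff_continuousAt.2 fun s => (hasDerivAt_asymE hp a b s).continuousAt

lemma continuous_asymFlux (hp : 1 < p) (a b : ℝ) : Continuous (asymFlux p a b) := by
  have hp1 : 0 ≤ p - 1 := by linarith
  exact (continuous_const.mul ((continuous_id.max continuous_const).rpow_const
    fun _ => .inr hp1)).sub (continuous_const.mul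
    ((continuous_neg.max continuous_const).rpow_const fun _ => .inr hp1))

lemma asymE_nonneg (p : ℝ) (ha : 0 ≤ a) (hb : 0 ≤ b) (s : ℝ) : 0 ≤ asymE p a b s := by
  unfold asymE
  positivity

lemma asymFlux_asymFlux_inv (hpq : p.HolderConjugate q) (ha : 0 < a) (hb : 0 < b) (s : ℝ) :
    asymFlux q a⁻¹ b⁻¹ (asymFlux p a b s) = s := by
  wlog hs : 0 ≤ s generalizing a b s
  · have h := this hb ha (-s) (by linarith)
    rwa [asymFlux_neg, asymFlux_neg, neg_inj] at h
  have h_exp_a : p * (q - 1) = q := by linarith [hpq.mul_eq_add]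
  have h_exp_s : (p - 1) * (q - 1) = 1 := by linarith [hpq.mul_eq_add]
  have h_pos : 0 < a ^ q := by positivity
  rw [asymFlux_of_nonneg hpq.lt.ne' hs, asymFlux_of_nonneg hpq.symm.lt.ne' (by positivity),
    Real.mul_rpow (by positivity) (by positivity), ← Real.rpow_mul ha.le, ← Real.rpow_mul hs,
    Real.inv_rpow ha.le, h_exp_a, h_exp_s, Real.rpow_one, inv_mul_cancel_left₀ h_pos.ne']

lemma asymE_asymFlux_inv (hpq : p.HolderConjugate q) (ha : 0 < a) (hb : 0 < b) (s : ℝ) :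
    asymE q a⁻¹ b⁻¹ (asymFlux p a b s) = asymE p a b s := by
  rw [← asymFlux_mul_self hpq.symm.lt, asymFlux_asymFlux_inv hpq ha hb, mul_comm,
    asymFlux_mul_self hpq.lt]

lemma monotone_asymFlux (hp : 1 ≤ p) (ha : 0 ≤ a) (hb : 0 ≤ b) : Monotone (asymFlux p a b) := by
  intro s t hst
  have : 0 ≤ p - 1 := by linarith
  unfold asymFlux
  gcongr

lemma strictMono_asymFlux (hp : 1 < p) (ha : 0 < a) (hb : 0 < b) : StrictMono (asymFlux p a b) :=
  (monotone_asymFlux hp.le ha.le hb.le).strictMono_of_injective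
    (Function.LeftInverse.injective
      (asymFlux_asymFlux_inv (Real.HolderConjugate.conjExponent hp) ha hb))

lemma asymFlux_pos_iff (hp : 1 < p) (ha : 0 < a) (hb : 0 < b) {s : ℝ} :
    0 < asymFlux p a b s ↔ 0 < s := by
  simpa only [asymFlux_zero hp.ne'] using
    (strictMono_asymFlux hp ha hb).lt_iff_lt (a := 0) (b := s)

lemma convexOn_asymE (hp : 1 < p) (ha : 0 ≤ a) (hb : 0 ≤ b) : ConvexOn ℝ univ (asymE p a b) := by
  have h_deriv : deriv (asymE p a b) = fun s => p * asymFlux p a b s :=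
    funext fun s => (hasDerivAt_asymE hp a b s).deriv
  refine Monotone.convexOn_univ_of_deriv (fun s => (hasDerivAt_asymE hp a b s).differentiableAt) ?_
  rw [h_deriv]
  exact (monotone_asymFlux hp.le ha hb).const_mul (by linarith)

-- Young's inequality is the statement that the convex `asymE` lies above its tangent at `y`.
lemma mul_asymFlux_mul_le (hp : 1 < p) (ha : 0 ≤ a) (hb : 0 ≤ b) (x y : ℝ) :
    p * (asymFlux p a b y * x) ≤ asymE p a b x + (p - 1) * asymE p a b y := by
  have h_convex := convexOn_asymE hp ha hb
  have h_deriv := hasDerivAt_asymE hp a b y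
  have h_tangent : p * asymFlux p a b y * (x - y) ≤ asymE p a b x - asymE p a b y := by
    rcases lt_trichotomy x y with hxy | rfl | hxy
    · have h := h_convex.slope_le_of_hasDerivAt (mem_univ x) (mem_univ y) hxy h_deriv
      rw [slope_def_field, div_le_iff₀ (sub_pos.2 hxy)] at h
      linarith
    · simp only [sub_self, mul_zero, le_refl]
    · have h := h_convex.le_slope_of_hasDerivAt (mem_univ y) (mem_univ x) hxy h_deriv
      rwa [slope_def_field, le_div_iff₀ (sub_pos.2 hxy)] at h
  linear_combination h_tangent + p * asymFlux_mul_self (a := a) (b := b) hp y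

lemma mul_asymFlux_mul_rpow_le (hp : 1 < p) (ha : 0 ≤ a) (hb : 0 ≤ b) {s : ℝ} (hs : 0 ≤ s)
    (x y : ℝ) : p * (asymFlux p a b y * s ^ (p - 1) * x) ≤
      asymE p a b x + (p - 1) * asymE p a b y * s ^ p := by
  have h := mul_asymFlux_mul_le hp ha hb x (s * y)
  rw [asymFlux_const_mul _ _ _ hs, asymE_const_mul _ _ _ hs] at h
  linarith

end Flux

namespace C1On

variable {α β γ α' γ' : ℝ} {u u' v v' : ℝ → ℝ}

lemma continuousOn (h : C1On α γ u u') : ContinuousOn u (Icc α γ) :=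
  fun t ht => (h.1 t ht).continuousWithinAt

lemma hasDerivAt (h : C1On α γ u u') {t : ℝ} (ht : t ∈ Ioo α γ) : HasDerivAt u (u' t) t :=
  (h.1 t (Ioo_subset_Icc_self ht)).hasDerivAt (Icc_mem_nhds ht.1 ht.2)

lemma congr (h : C1On α γ u u') (hv : EqOn v u (Icc α γ)) (hv' : EqOn v' u' (Icc α γ)) :
    C1On α γ v v' :=
  ⟨fun t ht => ((h.1 t ht).congr hv (hv ht)).congr_deriv (hv' ht).symm, h.2.congr hv'⟩

lemma mono (h : C1On α γ u u') (hα : α ≤ α') (hγ : γ' ≤ γ) : C1On α' γ' u u' :=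
  ⟨fun t ht => (h.1 t (Icc_subset_Icc hα hγ ht)).mono (Icc_subset_Icc hα hγ),
    h.2.mono (Icc_subset_Icc hα hγ)⟩

lemma neg (h : C1On α γ u u') : C1On α γ (fun t => -u t) (fun t => -u' t) :=
  ⟨fun t ht => (h.1 t ht).neg, h.2.neg⟩

lemma const_mul (c : ℝ) (h : C1On α γ u u') : C1On α γ (fun t => c * u t) (fun t => c * u' t) :=
  ⟨fun t ht => (h.1 t ht).const_mul c, continuousOn_const.mul h.2⟩

lemma add (hu : C1On α γ u u') (hv : C1On α γ v v') :
    C1On α γ (fun t => u t + v t) (fun t => u' t + v' t) :=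
  ⟨fun t ht => (hu.1 t ht).add (hv.1 t ht), hu.2.add hv.2⟩

lemma mul (hu : C1On α γ u u') (hv : C1On α γ v v') :
    C1On α γ (fun t => u t * v t) (fun t => u' t * v t + u t * v' t) :=
  ⟨fun t ht => (hu.1 t ht).mul (hv.1 t ht),
    (hu.2.mul hv.continuousOn).add (hu.continuousOn.mul hv.2)⟩

lemma comp {φ φ' : ℝ → ℝ} (hu : C1On α γ u u') (hφ : C1On α' γ' φ φ')
    (h_maps : MapsTo φ (Icc α' γ') (Icc α γ)) :
    C1On α' γ' (fun t => u (φ t)) (fun t => u' (φ t) * φ' t) :=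
  ⟨fun t ht => (hu.1 (φ t) (h_maps ht)).comp t (hφ.1 t ht) h_maps,
    (hu.2.comp hφ.continuousOn h_maps).mul hφ.2⟩

lemma hasDerivAt_comp {f f' : ℝ → ℝ} (hf : ∀ s, HasDerivAt f (f' s) s) (hf' : Continuous f')
    (hu : C1On α γ u u') : C1On α γ (fun t => f (u t)) (fun t => f' (u t) * u' t) :=
  ⟨fun t ht => (hf (u t)).comp_hasDerivWithinAt t (hu.1 t ht),
    (hf'.comp_continuousOn hu.continuousOn).mul hu.2⟩

lemma shift (h : C1On α γ u u') (c : ℝ) :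
    C1On (α + c) (γ + c) (fun t => u (t - c)) (fun t => u' (t - c)) := by
  have h_sub : C1On (α + c) (γ + c) (fun t => t - c) (fun _ => 1) :=
    ⟨fun t _ => ((hasDerivAt_id t).sub_const c).hasDerivWithinAt, continuousOn_const⟩
  simpa only [mul_one] using h.comp h_sub fun t ht => ⟨by linarith [ht.1], by linarith [ht.2]⟩

lemma reflect (h : C1On α γ u u') (c : ℝ) :
    C1On (c - γ) (c - α) (fun t => u (c - t)) (fun t => -u' (c - t)) := by
  have h_sub : C1On (c - γ) (c - α) (fun t => c - t) (fun _ => -1) :=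
    ⟨fun t _ => ((hasDerivAt_id t).const_sub c).hasDerivWithinAt, continuousOn_const⟩
  simpa only [mul_neg_one] using h.comp h_sub fun t ht => ⟨by linarith [ht.2], by linarith [ht.1]⟩

lemma integral_eq (h : C1On α γ u u') (hαγ : α ≤ γ) : ∫ t in α..γ, u' t = u γ - u α :=
  intervalIntegral.integral_eq_sub_of_hasDerivAt_of_le hαγ h.continuousOn
    (fun _ ht => h.hasDerivAt ht) (h.2.intervalIntegrable_of_Icc hαγ)

lemma eq_of_deriv_eq_zero (h : C1On α γ u u') (h_zero : ∀ t ∈ Icc α γ, u' t = 0) {s t : ℝ}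
    (hs : s ∈ Icc α γ) (ht : t ∈ Icc α γ) : u s = u t := by
  have eq_left {r : ℝ} (hr : r ∈ Icc α γ) : u r = u α := by
    rw [← sub_eq_zero, ← (h.mono le_rfl hr.2).integral_eq hr.1,
      ← intervalIntegral.integral_zero (a := α) (b := r)]
    refine intervalIntegral.integral_congr fun x hx => h_zero x ?_
    rw [uIcc_of_le hr.1] at hx
    exact Icc_subset_Icc_right hr.2 hx
  rw [eq_left hs, eq_left ht]

lemma integral_mul_deriv_add (hu : C1On α γ u u') (hv : C1On α γ v v') (hαγ : α ≤ γ)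
    (hvα : v α = 0) (hvγ : v γ = 0) :
    (∫ t in α..γ, u t * v' t) + ∫ t in α..γ, u' t * v t = 0 := by
  rw [add_comm, ← intervalIntegral.integral_add
    ((hu.2.fun_mul hv.continuousOn).intervalIntegrable_of_Icc hαγ)
    ((hu.continuousOn.fun_mul hv.2).intervalIntegrable_of_Icc hαγ),
    (hu.mul hv).integral_eq hαγ, hvα, hvγ, mul_zero, mul_zero, sub_zero]

lemma exists_ne_zero (h : C1On α γ u u') (hαγ : α < γ) (hu' : u' α ≠ 0) :
    ∃ t ∈ Icc α γ, u t ≠ 0 := by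
  by_contra! h_zero
  have hα : α ∈ Icc α γ := left_mem_Icc.2 hαγ.le
  have h_deriv := (hasDerivWithinAt_const α (Icc α γ) (0 : ℝ)).congr h_zero (h_zero α hα)
  exact hu' ((uniqueDiffOn_Icc hαγ α hα).eq_deriv _ (h.1 α hα) h_deriv)

end C1On

lemma c1On_integral {α γ : ℝ} {g : ℝ → ℝ} (hg : ContinuousOn g (Icc α γ)) :
    C1On α γ (fun t => ∫ s in α..t, g s) g := by
  refine ⟨fun t ht => ?_, hg⟩
  have : Fact (t ∈ Icc α γ) := ⟨ht⟩
  exact intervalIntegral.integral_hasDerivWithinAt_right (s := Icc α γ) (t := Icc α γ)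
    ((hg.mono (Icc_subset_Icc_right ht.2)).intervalIntegrable_of_Icc ht.1)
    (hg.stronglyMeasurableAtFilter_nhdsWithin measurableSet_Icc t) (hg t ht)

lemma c1On_of_hasDerivAt_off_countable {α γ : ℝ} {u u' : ℝ → ℝ} {s : Set ℝ} (hs : s.Countable)
    (hu : ContinuousOn u (Icc α γ)) (hu' : ContinuousOn u' (Icc α γ))
    (h_deriv : ∀ t ∈ Ioo α γ \ s, HasDerivAt u (u' t) t) : C1On α γ u u' := by
  have eq_integral : ∀ t ∈ Icc α γ, u t = u α + ∫ s in α..t, u' s := by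
    intro t ht
    have h_sub : Icc α t ⊆ Icc α γ := Icc_subset_Icc_right ht.2
    rw [MeasureTheory.integral_eq_of_hasDerivAt_off_countable_of_le u u' ht.1 hs (hu.mono h_sub)
      (fun x hx => h_deriv x ⟨Ioo_subset_Ioo_right ht.2 hx.1, hx.2⟩)
      ((hu'.mono h_sub).intervalIntegrable_of_Icc ht.1), add_sub_cancel]
  exact ⟨fun t ht => (((c1On_integral hu').1 t ht).const_add (u α)).congr eq_integral
    (eq_integral t ht), hu'⟩

lemma C1On.glue {α β γ : ℝ} {u u' v v' : ℝ → ℝ} (hαβ : α ≤ β) (hβγ : β ≤ γ)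
    (hu : C1On α β u u') (hv : C1On β γ v v') (huv : u β = v β) (huv' : u' β = v' β) :
    C1On α γ (fun t => if t ≤ β then u t else v t) (fun t => if t ≤ β then u' t else v' t) := by
  have continuousOn_ite {f g : ℝ → ℝ} (hf : ContinuousOn f (Icc α β))
      (hg : ContinuousOn g (Icc β γ)) (hfg : f β = g β) :
      ContinuousOn (fun t => if t ≤ β then f t else g t) (Icc α γ) := by
    rw [← Icc_union_Icc_eq_Icc hαβ hβγ]
    refine (hf.congr fun t ht => if_pos ht.2).union_of_isClosed (hg.congr fun t ht => ?_)
      isClosed_Icc isClosed_Icc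
    rcases ht.1.eq_or_lt with rfl | hβt
    · rw [if_pos le_rfl, hfg]
    · exact if_neg hβt.not_ge
  refine c1On_of_hasDerivAt_off_countable (countable_singleton β)
    (continuousOn_ite hu.continuousOn hv.continuousOn huv) (continuousOn_ite hu.2 hv.2 huv') ?_
  rintro t ⟨ht, htβ⟩
  rcases lt_or_gt_of_ne htβ with h | h
  · rw [if_pos h.le]
    refine (hu.hasDerivAt ⟨ht.1, h⟩).congr_of_eventuallyEq ?_
    filter_upwards [Iio_mem_nhds h] with x hx using if_pos (le_of_lt hx)
  · rw [if_neg h.not_ge]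
    refine (hv.hasDerivAt ⟨h, ht.2⟩).congr_of_eventuallyEq ?_
    filter_upwards [Ioi_mem_nhds h] with x hx using if_neg (not_le.2 hx)

open Topology in
lemma exists_first_zero_of_eventually_pos {α γ : ℝ} {f : ℝ → ℝ} (hf : ContinuousOn f (Icc α γ))
    (h_pos : ∀ᶠ t in 𝓝[>] α, 0 < f t) (hαγ : α < γ) (hγ : f γ ≤ 0) :
    ∃ β ∈ Ioc α γ, f β = 0 ∧ ∀ t ∈ Ioo α β, 0 < f t := by
  obtain ⟨m, hαm, hm⟩ := mem_nhdsGT_iff_exists_Ioc_subset.1 h_pos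
  have hmγ : m < γ := by
    by_contra! h
    exact hγ.not_gt (hm ⟨hαγ, h⟩)
  have hf_m : ContinuousOn f (Icc m γ) := hf.mono (Icc_subset_Icc_left hαm.le)
  have h_compact : IsCompact (Icc m γ ∩ f ⁻¹' Iic 0) :=
    isCompact_Icc.of_isClosed_subset
      (hf_m.preimage_isClosed_of_isClosed isClosed_Icc isClosed_Iic) inter_subset_left
  obtain ⟨β, ⟨hβ, hfβ⟩, h_least⟩ := h_compact.exists_isLeast ⟨γ, right_mem_Icc.2 hmγ.le, hγ⟩
  obtain ⟨c, hc, hfc⟩ := intermediate_value_Icc' hβ.1 (hf_m.mono (Icc_subset_Icc_right hβ.2))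
    ⟨hfβ, (hm ⟨hαm, le_rfl⟩).le⟩
  obtain rfl : c = β :=
    le_antisymm hc.2 (h_least ⟨Icc_subset_Icc_right hβ.2 hc, hfc.le⟩)
  refine ⟨c, ⟨hαm.trans_le hβ.1, hβ.2⟩, hfc, fun t ht => ?_⟩
  by_contra! hft
  rcases le_total t m with htm | hmt
  · exact hft.not_gt (hm ⟨ht.1, htm⟩)
  · exact ht.2.not_ge (h_least ⟨⟨hmt, ht.2.le.trans hβ.2⟩, hft⟩)

lemma C1On.exists_first_zero {α γ : ℝ} {u u' : ℝ → ℝ} (h : C1On α γ u u') (hαγ : α < γ)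
    (hα : u α = 0) (hu' : 0 < u' α) (hγ : u γ ≤ 0) :
    ∃ β ∈ Ioc α γ, u β = 0 ∧ ∀ t ∈ Ioo α β, 0 < u t := by
  refine exists_first_zero_of_eventually_pos h.continuousOn ?_ hαγ hγ
  have h_slope := ((hasDerivWithinAt_iff_tendsto_slope' left_notMem_Ioc).1
    ((h.1 α (left_mem_Icc.2 hαγ.le)).mono Ioc_subset_Icc_self)).eventually_const_lt hu'
  rw [nhdsWithin_Ioc_eq_nhdsGT hαγ] at h_slope
  filter_upwards [h_slope, self_mem_nhdsWithin] with t ht hαt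
  rw [slope_def_field, hα, sub_zero] at ht
  exact (div_pos_iff_of_pos_right (sub_pos.2 hαt)).1 ht

lemma exists_eq_const_of_integral_mul_deriv_eq_zero {L : ℝ} {w : ℝ → ℝ} (hL : 0 < L)
    (hw : ContinuousOn w (Icc 0 L))
    (h_test : ∀ φ φ' : ℝ → ℝ, Adm L φ φ' → ∫ t in (0 : ℝ)..L, w t * φ' t = 0) :
    ∃ c, ∀ t ∈ Icc 0 L, w t = c := by
  let c := (∫ t in (0 : ℝ)..L, w t) / L
  have hwc : ContinuousOn (fun t => w t - c) (Icc 0 L) := hw.sub continuousOn_const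
  have h_mean : ∫ t in (0 : ℝ)..L, (w t - c) = 0 := by
    rw [intervalIntegral.integral_sub (hw.intervalIntegrable_of_Icc hL.le)
      intervalIntegrable_const, intervalIntegral.integral_const, smul_eq_mul, sub_zero,
      mul_div_cancel₀ _ hL.ne', sub_self]
  have h_adm : Adm L (fun t => ∫ s in (0 : ℝ)..t, (w s - c)) (fun t => w t - c) :=
    ⟨c1On_integral hwc, intervalIntegral.integral_same, h_mean⟩
  have h_sq : ∫ t in (0 : ℝ)..L, (w t - c) * (w t - c) = 0 := by
    simp_rw [sub_mul (w _) c (w _ - c)]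
    rw [intervalIntegral.integral_sub ((hw.fun_mul hwc).intervalIntegrable_of_Icc hL.le)
      ((continuousOn_const.fun_mul hwc).intervalIntegrable_of_Icc hL.le), h_test _ _ h_adm,
      intervalIntegral.integral_const_mul, h_mean, mul_zero, sub_zero]
  refine ⟨c, ?_⟩
  by_contra! ⟨t, ht, hwt⟩
  exact h_sq.not_gt (intervalIntegral.integral_pos hL (hwc.mul hwc)
    (fun _ _ => mul_self_nonneg _) ⟨t, ht, mul_self_pos.2 (sub_ne_zero.2 hwt)⟩)

lemma isWeakSol_iff {p a b L : ℝ} {u u' g : ℝ → ℝ} (hp : 1 < p) (hL : 0 < L)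
    (hg : ContinuousOn g (Icc 0 L)) :
    IsWeakSol p a b L u u' g ↔
      Adm L u u' ∧ C1On 0 L (fun t => asymFlux p a b (u' t)) (fun t => -g t) := by
  refine and_congr_right fun hu => ⟨fun h_weak => ?_, fun h_flux φ φ' hφ => ?_⟩
  · have h_prim := c1On_integral hg
    have hw : ContinuousOn (fun t => asymFlux p a b (u' t)) (Icc 0 L) :=
      (continuous_asymFlux hp a b).comp_continuousOn hu.1.2
    obtain ⟨c, hc⟩ := exists_eq_const_of_integral_mul_deriv_eq_zero hL
      (hw.add h_prim.continuousOn) fun φ φ' hφ => by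
        simp_rw [Pi.add_apply, add_mul]
        rw [intervalIntegral.integral_add ((hw.fun_mul hφ.1.2).intervalIntegrable_of_Icc hL.le)
          ((h_prim.continuousOn.fun_mul hφ.1.2).intervalIntegrable_of_Icc hL.le),
          h_weak φ φ' hφ, add_comm]
        exact h_prim.integral_mul_deriv_add hφ.1 hL.le hφ.2.1 hφ.2.2
    refine C1On.congr ⟨fun t ht => (h_prim.1 t ht).const_sub c, hg.neg⟩ (fun t ht => ?_)
      (fun t _ => rfl)
    exact eq_sub_of_add_eq (hc t ht)
  · have h_parts := h_flux.integral_mul_deriv_add hφ.1 hL.le hφ.2.1 hφ.2.2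
    simp_rw [neg_mul, intervalIntegral.integral_neg] at h_parts
    linarith

/-- `u` solves `-Δ^{a,b}_p u = lam |u|^(p-2) u` pointwise on `[α, β]`: its flux is C¹ and satisfies
the equation. The function `|s|^(p-2) s` on the right-hand side is encoded as `asymFlux p 1 1 s`. -/
def IsStrongSol (p a b lam α β : ℝ) (u u' : ℝ → ℝ) : Prop :=
  C1On α β u u' ∧
  C1On α β (fun t => asymFlux p a b (u' t)) (fun t => -(lam * asymFlux p 1 1 (u t)))

namespace IsStrongSol

variable {p a b lam α β γ : ℝ} {u u' v v' : ℝ → ℝ}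

lemma mono {α' β' : ℝ} (h : IsStrongSol p a b lam α β u u') (hα : α ≤ α') (hβ : β' ≤ β) :
    IsStrongSol p a b lam α' β' u u' :=
  ⟨h.1.mono hα hβ, h.2.mono hα hβ⟩

lemma shift (h : IsStrongSol p a b lam α β u u') (c : ℝ) :
    IsStrongSol p a b lam (α + c) (β + c) (fun t => u (t - c)) (fun t => u' (t - c)) :=
  ⟨h.1.shift c, h.2.shift c⟩

lemma reflect (h : IsStrongSol p a b lam α β u u') (c : ℝ) :
    IsStrongSol p b a lam (c - β) (c - α) (fun t => u (c - t)) (fun t => -u' (c - t)) :=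
  ⟨h.1.reflect c, (h.2.reflect c).neg.congr (fun _ _ => asymFlux_neg p b a _)
    (fun _ _ => (neg_neg _).symm)⟩

lemma neg (h : IsStrongSol p a b lam α β u u') :
    IsStrongSol p b a lam α β (fun t => -u t) (fun t => -u' t) := by
  refine ⟨h.1.neg, h.2.neg.congr (fun _ _ => asymFlux_neg p b a _) (fun t _ => ?_)⟩
  rw [asymFlux_neg, mul_neg]

lemma glue (hαβ : α ≤ β) (hβγ : β ≤ γ) (hu : IsStrongSol p a b lam α β u u')
    (hv : IsStrongSol p a b lam β γ v v') (huv : u β = v β) (huv' : u' β = v' β) :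
    IsStrongSol p a b lam α γ (fun t => if t ≤ β then u t else v t)
      (fun t => if t ≤ β then u' t else v' t) := by
  refine ⟨hu.1.glue hαβ hβγ hv.1 huv huv',
    (hu.2.glue hαβ hβγ hv.2 (by rw [huv']) (by rw [huv])).congr (fun t _ => ?_) (fun t _ => ?_)⟩
  · exact apply_ite (asymFlux p a b) _ _ _
  · exact apply_ite (fun s => -(lam * asymFlux p 1 1 s)) _ _ _

-- In terms of the flux `w`, the energy `asymE p a b u'` is `asymE q a⁻¹ b⁻¹ w` with `q` the
-- conjugate exponent; unlike `u'`, the flux is differentiable.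
lemma energy_eq (h : IsStrongSol p a b lam α β u u') (hp : 1 < p) (ha : 0 < a) (hb : 0 < b)
    {s t : ℝ} (hs : s ∈ Icc α β) (ht : t ∈ Icc α β) :
    (p - 1) * asymE p a b (u' s) + lam * |u s| ^ p =
      (p - 1) * asymE p a b (u' t) + lam * |u t| ^ p := by
  obtain ⟨q, hpq⟩ : ∃ q, p.HolderConjugate q := ⟨_, .conjExponent hp⟩
  have h_flux := h.2.hasDerivAt_comp (hasDerivAt_asymE hpq.symm.lt a⁻¹ b⁻¹)
    (continuous_const.mul (continuous_asymFlux hpq.symm.lt _ _))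
  have h_u := h.1.hasDerivAt_comp (hasDerivAt_asymE hp 1 1)
    (continuous_const.mul (continuous_asymFlux hp _ _))
  simp_rw [asymE_asymFlux_inv hpq ha hb, asymFlux_asymFlux_inv hpq ha hb] at h_flux
  simp_rw [asymE_one_one hpq.ne_zero] at h_u
  refine ((h_flux.const_mul (p - 1)).add (h_u.const_mul lam)).eq_of_deriv_eq_zero
    (fun r _ => ?_) hs ht
  linear_combination -u' r * lam * asymFlux p 1 1 (u r) * hpq.mul_eq_add

lemma integral_asymE_deriv (h : IsStrongSol p a b lam α β u u') (hp : 1 < p) (hαβ : α ≤ β)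
    (hα : u α = 0) (hβ : u β = 0) :
    ∫ t in α..β, asymE p a b (u' t) = lam * ∫ t in α..β, |u t| ^ p := by
  have h_parts := h.2.integral_mul_deriv_add h.1 hαβ hα hβ
  simp_rw [neg_mul, mul_assoc, asymFlux_mul_self hp, asymE_one_one (by linarith : p ≠ 0),
    intervalIntegral.integral_neg, intervalIntegral.integral_const_mul] at h_parts
  linarith

end IsStrongSol

lemma dirichletEig_iff_exists_isStrongSol {p a b L lam : ℝ} (hp : 1 < p) (hL : 0 < L) :
    DirichletEig p a b L lam ↔ ∃ u u' : ℝ → ℝ, IsStrongSol p a b lam 0 L u u' ∧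
      u 0 = 0 ∧ u L = 0 ∧ ∃ t ∈ Icc 0 L, u t ≠ 0 := by
  refine exists₂_congr fun u u' => ?_
  rw [← and_assoc, ← and_assoc]
  refine and_congr_left fun _ => ?_
  simp_rw [mul_assoc, ← asymFlux_one_one hp]
  have hg (hu : C1On 0 L u u') : ContinuousOn (fun t => lam * asymFlux p 1 1 (u t)) (Icc 0 L) :=
    continuousOn_const.mul ((continuous_asymFlux hp 1 1).comp_continuousOn hu.continuousOn)
  refine ⟨fun h => ?_, fun ⟨⟨h, h_zero⟩, hL_zero⟩ => ?_⟩
  · exact ⟨⟨⟨h.1.1, ((isWeakSol_iff hp hL (hg h.1.1)).1 h).2⟩, h.1.2.1⟩, h.1.2.2⟩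
  · exact (isWeakSol_iff hp hL (hg h.1)).2 ⟨⟨h.1, h_zero, hL_zero⟩, h.2⟩

section Sinp

variable {p s τ : ℝ}

/-- The derivative `(1 - s^p)^(-1/p)` of the generalized arcsine. Its extension by `1` outside
`(0, 1)` makes the generalized arcsine an increasing bijection of `ℝ`. -/
noncomputable def arcsinpDeriv (p s : ℝ) : ℝ :=
  if 0 < s ∧ s < 1 then (1 - s ^ p) ^ (-(1 / p)) else 1

/-- The generalized arcsine, `∫₀ˣ (1 - s^p)^(-1/p) ds` for `0 ≤ x ≤ 1`. -/
noncomputable def arcsinp (p x : ℝ) : ℝ := ∫ s in (0 : ℝ)..x, arcsinpDeriv p s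

/-- Half of the generalized `π`, the number usually written `π_p / 2`. -/
noncomputable def halfPi (p : ℝ) : ℝ := arcsinp p 1

/-- The generalized sine, which is the usual one only on the quarter period `[0, halfPi p]`. -/
noncomputable def sinp (p : ℝ) : ℝ → ℝ := Function.invFun (arcsinp p)

/-- The generalized cosine, the derivative of `sinp p` on the quarter period `[0, halfPi p]`. -/
noncomputable def cosp (p τ : ℝ) : ℝ := (1 - sinp p τ ^ p) ^ (1 / p)

lemma one_sub_rpow_pos (hp : 0 < p) (h0 : 0 ≤ s) (h1 : s < 1) : 0 < 1 - s ^ p :=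
  sub_pos.2 (Real.rpow_lt_one h0 h1 hp)

lemma one_le_arcsinpDeriv (hp : 0 < p) (s : ℝ) : 1 ≤ arcsinpDeriv p s := by
  unfold arcsinpDeriv
  split_ifs with hs
  · have h_nonneg : 0 ≤ s ^ p := Real.rpow_nonneg hs.1.le _
    exact Real.one_le_rpow_of_pos_of_le_one_of_nonpos (one_sub_rpow_pos hp hs.1.le hs.2)
      (by linarith) (neg_nonpos.2 (by positivity))
  · exact le_rfl

lemma arcsinpDeriv_le (hp : 1 ≤ p) (s : ℝ) :
    arcsinpDeriv p s ≤ |(1 - s) ^ (-(1 / p))| + 1 := by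
  unfold arcsinpDeriv
  split_ifs with hs
  · have h_rpow : s ^ p ≤ s := by
      simpa only [Real.rpow_one] using Real.rpow_le_rpow_of_exponent_ge hs.1 hs.2.le hp
    have h_le : (1 - s ^ p) ^ (-(1 / p)) ≤ (1 - s) ^ (-(1 / p)) :=
      Real.rpow_le_rpow_of_nonpos (by linarith [hs.2]) (by linarith)
        (neg_nonpos.2 (by positivity))
    linarith [le_abs_self ((1 - s) ^ (-(1 / p)))]
  · linarith [abs_nonneg ((1 - s) ^ (-(1 / p)))]

lemma measurable_arcsinpDeriv (p : ℝ) : Measurable (arcsinpDeriv p) :=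
  Measurable.ite measurableSet_Ioo (by fun_prop) measurable_const

lemma intervalIntegrable_arcsinpDeriv (hp : 1 < p) (x y : ℝ) :
    IntervalIntegrable (arcsinpDeriv p) MeasureTheory.volume x y := by
  have h_exp : -1 < -(1 / p) := by
    rw [neg_lt_neg_iff, div_lt_one (by linarith)]
    exact hp
  have h_bound :
      IntervalIntegrable (fun s : ℝ => (1 - s) ^ (-(1 / p))) MeasureTheory.volume x y := by
    simpa only [sub_sub_cancel] using (intervalIntegral.intervalIntegrable_rpow' h_exp
      (a := 1 - x) (b := 1 - y)).comp_sub_left 1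
  refine (h_bound.abs.add (intervalIntegrable_const (c := (1 : ℝ)))).mono_fun
    (measurable_arcsinpDeriv p).aestronglyMeasurable (Filter.Eventually.of_forall fun s => ?_)
  have h_one_le := one_le_arcsinpDeriv (by linarith : 0 < p) s
  beta_reduce
  rw [Real.norm_of_nonneg (zero_le_one.trans h_one_le)]
  exact (arcsinpDeriv_le hp.le s).trans (Real.le_norm_self _)

lemma arcsinp_zero (p : ℝ) : arcsinp p 0 = 0 := intervalIntegral.integral_same

lemma continuous_arcsinp (hp : 1 < p) : Continuous (arcsinp p) :=
  intervalIntegral.continuous_primitive (intervalIntegrable_arcsinpDeriv hp) 0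

lemma sub_le_arcsinp_sub (hp : 1 < p) {x y : ℝ} (hxy : x ≤ y) :
    y - x ≤ arcsinp p y - arcsinp p x := by
  have h_int := intervalIntegrable_arcsinpDeriv hp
  have h_mono := intervalIntegral.integral_mono_on hxy intervalIntegrable_const (h_int x y)
    (fun s _ => one_le_arcsinpDeriv (by linarith) s)
  rw [intervalIntegral.integral_const, smul_eq_mul, mul_one] at h_mono
  rwa [arcsinp, arcsinp, intervalIntegral.integral_interval_sub_left (h_int _ _) (h_int _ _)]

lemma strictMono_arcsinp (hp : 1 < p) : StrictMono (arcsinp p) := fun x y hxy => by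
  linarith [sub_le_arcsinp_sub hp hxy.le]

lemma surjective_arcsinp (hp : 1 < p) : Function.Surjective (arcsinp p) := by
  refine (continuous_arcsinp hp).surjective
    (Filter.tendsto_atTop_mono' _ ?_ Filter.tendsto_id)
    (Filter.tendsto_atBot_mono' _ ?_ Filter.tendsto_id)
  · filter_upwards [Filter.eventually_ge_atTop 0] with x hx
    simpa only [id_eq, arcsinp_zero, sub_zero] using sub_le_arcsinp_sub hp hx
  · filter_upwards [Filter.eventually_le_atBot 0] with x hx
    simpa only [id_eq, arcsinp_zero, zero_sub, neg_le_neg_iff] using sub_le_arcsinp_sub hp hx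

lemma hasDerivAt_arcsinp (hp : 1 < p) (h0 : 0 < s) (h1 : s < 1) :
    HasDerivAt (arcsinp p) ((1 - s ^ p) ^ (-(1 / p))) s := by
  have h_deriv (r : ℝ) (hr : r ∈ Ioo 0 1) : (1 - r ^ p) ^ (-(1 / p)) = arcsinpDeriv p r :=
    (if_pos hr).symm
  have h_cont : ContinuousAt (fun s : ℝ => (1 - s ^ p) ^ (-(1 / p))) s :=
    (continuousAt_const.sub (Real.continuousAt_rpow_const _ _ (.inl h0.ne'))).rpow_const
      (.inl (one_sub_rpow_pos (by linarith) h0.le h1).ne')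
  rw [h_deriv s ⟨h0, h1⟩]
  refine intervalIntegral.integral_hasDerivAt_right (intervalIntegrable_arcsinpDeriv hp _ _)
    (measurable_arcsinpDeriv p).stronglyMeasurable.stronglyMeasurableAtFilter
    (h_cont.congr ?_)
  filter_upwards [Ioo_mem_nhds h0 h1] with r hr using h_deriv r hr

lemma halfPi_pos (hp : 1 < p) : 0 < halfPi p := by
  simpa only [arcsinp_zero, halfPi] using strictMono_arcsinp hp zero_lt_one

lemma sinp_arcsinp (hp : 1 < p) (x : ℝ) : sinp p (arcsinp p x) = x :=
  Function.leftInverse_invFun (strictMono_arcsinp hp).injective x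

lemma arcsinp_sinp (hp : 1 < p) (τ : ℝ) : arcsinp p (sinp p τ) = τ :=
  Function.rightInverse_invFun (surjective_arcsinp hp) τ

lemma strictMono_sinp (hp : 1 < p) : StrictMono (sinp p) := fun σ τ hστ => by
  rwa [← (strictMono_arcsinp hp).lt_iff_lt, arcsinp_sinp hp, arcsinp_sinp hp]

lemma continuous_sinp (hp : 1 < p) : Continuous (sinp p) :=
  (strictMono_sinp hp).monotone.continuous_of_surjective
    (Function.RightInverse.surjective (sinp_arcsinp hp))

lemma sinp_zero (hp : 1 < p) : sinp p 0 = 0 := by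
  simpa only [arcsinp_zero] using sinp_arcsinp hp 0

lemma sinp_halfPi (hp : 1 < p) : sinp p (halfPi p) = 1 := sinp_arcsinp hp 1

lemma sinp_pos (hp : 1 < p) (hτ : 0 < τ) : 0 < sinp p τ := by
  simpa only [sinp_zero hp] using strictMono_sinp hp hτ

lemma sinp_lt_one (hp : 1 < p) (hτ : τ < halfPi p) : sinp p τ < 1 := by
  simpa only [sinp_halfPi hp] using strictMono_sinp hp hτ

lemma cosp_zero (hp : 1 < p) : cosp p 0 = 1 := by
  rw [cosp, sinp_zero hp, Real.zero_rpow (by linarith), sub_zero, Real.one_rpow]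

lemma cosp_halfPi (hp : 1 < p) : cosp p (halfPi p) = 0 := by
  rw [cosp, sinp_halfPi hp, Real.one_rpow, sub_self,
    Real.zero_rpow (one_div_ne_zero (by linarith))]

lemma one_sub_sinp_rpow_nonneg (hp : 1 < p) (hτ : τ ∈ Icc 0 (halfPi p)) :
    0 ≤ 1 - sinp p τ ^ p := by
  have h0 : 0 ≤ sinp p τ := by
    simpa only [sinp_zero hp] using (strictMono_sinp hp).monotone hτ.1
  have h1 : sinp p τ ≤ 1 := by
    simpa only [sinp_halfPi hp] using (strictMono_sinp hp).monotone hτ.2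
  exact sub_nonneg.2 (Real.rpow_le_one h0 h1 (by linarith))

lemma cosp_nonneg (hp : 1 < p) (hτ : τ ∈ Icc 0 (halfPi p)) : 0 ≤ cosp p τ :=
  Real.rpow_nonneg (one_sub_sinp_rpow_nonneg hp hτ) _

lemma continuous_one_sub_sinp_rpow (hp : 1 < p) {r : ℝ} (hr : 0 ≤ r) :
    Continuous fun τ => (1 - sinp p τ ^ p) ^ r :=
  (continuous_const.sub ((continuous_sinp hp).rpow_const
    fun _ => .inr (by linarith))).rpow_const fun _ => .inr hr

lemma hasDerivAt_sinp (hp : 1 < p) (hτ : τ ∈ Ioo 0 (halfPi p)) :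
    HasDerivAt (sinp p) (cosp p τ) τ := by
  have h0 := sinp_pos hp hτ.1
  have h1 := sinp_lt_one hp hτ.2
  have h_pos := one_sub_rpow_pos (by linarith : 0 < p) h0.le h1
  have h_inv := HasDerivAt.of_local_left_inverse (continuous_sinp hp).continuousAt
    (hasDerivAt_arcsinp hp h0 h1) (by positivity)
    (Filter.Eventually.of_forall (arcsinp_sinp hp))
  rwa [Real.rpow_neg h_pos.le, inv_inv] at h_inv

lemma c1On_sinp (hp : 1 < p) : C1On 0 (halfPi p) (sinp p) (cosp p) :=
  c1On_of_hasDerivAt_off_countable countable_empty (continuous_sinp hp).continuousOn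
    (continuous_one_sub_sinp_rpow hp (by positivity)).continuousOn
    fun _ hτ => hasDerivAt_sinp hp hτ.1

lemma c1On_cosp_rpow (hp : 1 < p) :
    C1On 0 (halfPi p) (fun τ => cosp p τ ^ (p - 1))
      (fun τ => -((p - 1) * sinp p τ ^ (p - 1))) := by
  have hp_pos : 0 < p := by linarith
  have hp1 : 0 ≤ p - 1 := by linarith
  have h_exp : 1 / p * (p - 1) - 1 = -(1 / p) := by
    field_simp
    ring
  have h_deriv : ∀ τ ∈ Ioo 0 (halfPi p) \ ∅,
      HasDerivAt (fun τ => (1 - sinp p τ ^ p) ^ (1 / p * (p - 1)))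
        (-((p - 1) * sinp p τ ^ (p - 1))) τ := by
    rintro τ ⟨hτ, -⟩
    have h0 := sinp_pos hp hτ.1
    have h_pos := one_sub_rpow_pos hp_pos h0.le (sinp_lt_one hp hτ.2)
    have h_base := ((hasDerivAt_sinp hp hτ).rpow_const (p := p) (.inl h0.ne')).const_sub 1
    refine (h_base.rpow_const (.inl h_pos.ne')).congr_deriv ?_
    have h_ne : (1 - sinp p τ ^ p) ^ (1 / p) ≠ 0 := by positivity
    rw [h_exp, Real.rpow_neg h_pos.le, cosp]
    field_simp
  refine (c1On_of_hasDerivAt_off_countable countable_empty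
    (continuous_one_sub_sinp_rpow hp (by positivity)).continuousOn ?_ h_deriv).congr
    (fun τ hτ => (Real.rpow_mul (one_sub_sinp_rpow_nonneg hp hτ) _ _).symm) (fun _ _ => rfl)
  exact (continuous_const.mul
    ((continuous_sinp hp).rpow_const fun _ => .inr hp1)).neg.continuousOn

end Sinp

/-- The distance between consecutive zeros of a solution with `lam = (p - 1) * κ ^ p`. It is the
sum of the lengths `a * halfPi p / κ` and `b * halfPi p / κ` of the two monotone parts of a wave. -/
noncomputable def nodalLength (p a b κ : ℝ) : ℝ := (a + b) * halfPi p / κ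

section Waves

variable {p a b κ lam α β m L : ℝ} {u u' : ℝ → ℝ}

lemma nodalLength_comm (p a b κ : ℝ) : nodalLength p a b κ = nodalLength p b a κ := by
  rw [nodalLength, nodalLength, add_comm]

lemma nodalLength_pos (hp : 1 < p) (ha : 0 < a) (hb : 0 < b) (hκ : 0 < κ) :
    0 < nodalLength p a b κ := by
  have := halfPi_pos hp
  unfold nodalLength
  positivity

lemma nodalLength_lt {μ : ℝ} (hp : 1 < p) (ha : 0 < a) (hb : 0 < b) (hμ : 0 < μ) (hμκ : μ < κ) :
    nodalLength p a b κ < nodalLength p a b μ :=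
  div_lt_div_of_pos_left (mul_pos (add_pos ha hb) (halfPi_pos hp)) hμ hμκ

lemma nodalLength_eq_mul_nodalLength_iff {μ c : ℝ} (hp : 1 < p) (ha : 0 < a) (hb : 0 < b)
    (hκ : 0 < κ) (hμ : 0 < μ) :
    nodalLength p a b κ = c * nodalLength p a b μ ↔ μ = c * κ := by
  have h_wave : (a + b) * halfPi p ≠ 0 := (mul_pos (add_pos ha hb) (halfPi_pos hp)).ne'
  rw [nodalLength, nodalLength, mul_div_left_comm, div_eq_mul_inv, mul_right_inj' h_wave,
    inv_eq_one_div, div_eq_div_iff hκ.ne' hμ.ne', one_mul]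

lemma exists_nodalLength_eq (hp : 1 < p) (ha : 0 < a) (hb : 0 < b) (hL : 0 < L) :
    ∃ κ, 0 < κ ∧ nodalLength p a b κ = L :=
  ⟨nodalLength p a b L, nodalLength_pos hp ha hb hL, by
    have := halfPi_pos hp
    unfold nodalLength
    field_simp⟩

namespace IsStrongSol

lemma mul_deriv_eq (h : IsStrongSol p a b ((p - 1) * κ ^ p) α β u u') (hp : 1 < p) (ha : 0 < a)
    (hb : 0 < b) (hκ : 0 < κ) (hm : m ∈ Icc α β) (hum : 0 < u m) (hum' : u' m = 0) {t : ℝ}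
    (ht : t ∈ Icc α β) (hut : 0 ≤ u t) (hut' : 0 ≤ u' t) (h_le : u t ≤ u m) :
    a * u' t = κ * u m * (1 - (u t / u m) ^ p) ^ (1 / p) := by
  have hp0 : p ≠ 0 := by positivity
  have h_nonneg : 0 ≤ 1 - (u t / u m) ^ p :=
    sub_nonneg.2 (Real.rpow_le_one (by positivity) ((div_le_one hum).2 h_le) (by linarith))
  have h_energy : a ^ p * u' t ^ p = κ ^ p * (u m ^ p - u t ^ p) := by
    have h_eq := h.energy_eq hp ha hb ht hm
    rw [hum', asymE_zero hp0, asymE_of_nonneg hp0 hut', abs_of_nonneg hut, abs_of_pos hum] at h_eq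
    refine mul_left_cancel₀ (sub_ne_zero.2 hp.ne') ?_
    linarith
  have h_rpow : (a * u' t) ^ p = (κ * u m) ^ p * (1 - (u t / u m) ^ p) := by
    have : u m ^ p ≠ 0 := by positivity
    rw [Real.mul_rpow ha.le hut', h_energy, Real.mul_rpow hκ.le hum.le, Real.div_rpow hut hum.le]
    field_simp
  rw [← Real.rpow_rpow_inv (by positivity : 0 ≤ a * u' t) hp0, h_rpow, one_div,
    Real.mul_rpow (by positivity) h_nonneg, Real.rpow_rpow_inv (by positivity) hp0]

-- On an increasing quarter wave with maximum `u m`, the phase `arcsinp (u / u m)` advances at the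
-- constant speed `κ / a`.
lemma hasDerivAt_arcsinp (h : IsStrongSol p a b ((p - 1) * κ ^ p) α m u u') (hp : 1 < p)
    (ha : 0 < a) (hb : 0 < b) (hκ : 0 < κ) (hum' : u' m = 0) {t : ℝ} (ht : t ∈ Ioo α m)
    (hut : 0 < u t) (hut' : 0 < u' t) (h_lt : u t < u m) :
    HasDerivAt (fun t => arcsinp p (u t / u m)) (κ / a) t := by
  have hum : 0 < u m := hut.trans h_lt
  have h_lt_one : u t / u m < 1 := (div_lt_one hum).2 h_lt
  have h_pos : 0 < 1 - (u t / u m) ^ p :=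
    one_sub_rpow_pos (by linarith) (by positivity) h_lt_one
  have h_speed := h.mul_deriv_eq hp ha hb hκ (right_mem_Icc.2 (ht.1.trans ht.2).le) hum hum'
    (Ioo_subset_Icc_self ht) hut.le hut'.le h_lt.le
  refine ((_root_.hasDerivAt_arcsinp hp (by positivity) h_lt_one).comp t
    ((h.1.hasDerivAt ht).div_const (u m))).congr_deriv ?_
  have : (1 - (u t / u m) ^ p) ^ (1 / p) ≠ 0 := by positivity
  rw [eq_div_iff ha.ne', Real.rpow_neg h_pos.le, mul_assoc, div_mul_eq_mul_div, mul_comm (u' t),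
    h_speed]
  field_simp

lemma sub_eq_of_deriv_pos (h : IsStrongSol p a b ((p - 1) * κ ^ p) α m u u') (hp : 1 < p)
    (ha : 0 < a) (hb : 0 < b) (hκ : 0 < κ) (hαm : α < m) (huα : u α = 0) (hum' : u' m = 0)
    (h_pos : ∀ t ∈ Ioo α m, 0 < u' t) : m - α = a * halfPi p / κ := by
  have h_mono : StrictMonoOn u (Icc α m) := by
    refine strictMonoOn_of_deriv_pos (convex_Icc _ _) h.1.continuousOn fun t ht => ?_
    rw [interior_Icc] at ht
    rw [(h.1.hasDerivAt ht).deriv]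
    exact h_pos t ht
  have hα_mem : α ∈ Icc α m := left_mem_Icc.2 hαm.le
  have hm_mem : m ∈ Icc α m := right_mem_Icc.2 hαm.le
  have hum : 0 < u m := huα ▸ h_mono hα_mem hm_mem hαm
  have h_phase := intervalIntegral.integral_eq_sub_of_hasDerivAt_of_le hαm.le
    ((continuous_arcsinp hp).comp_continuousOn (h.1.continuousOn.div_const (u m)))
    (fun t ht => h.hasDerivAt_arcsinp hp ha hb hκ hum' ht
      (huα ▸ h_mono hα_mem (Ioo_subset_Icc_self ht) ht.1) (h_pos t ht)
      (h_mono (Ioo_subset_Icc_self ht) hm_mem ht.2)) intervalIntegrable_const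
  simp only [intervalIntegral.integral_const, smul_eq_mul, huα, zero_div, arcsinp_zero,
    div_self hum.ne', sub_zero, Function.comp_apply] at h_phase
  rw [halfPi, ← h_phase]
  field_simp

lemma strictAntiOn_deriv (h : IsStrongSol p a b lam α β u u') (hp : 1 < p) (ha : 0 < a)
    (hb : 0 < b) (hlam : 0 < lam) (h_pos : ∀ t ∈ Ioo α β, 0 < u t) :
    StrictAntiOn u' (Icc α β) := by
  have h_flux : StrictAntiOn (fun t => asymFlux p a b (u' t)) (Icc α β) := by
    refine strictAntiOn_of_deriv_neg (convex_Icc _ _) h.2.continuousOn fun t ht => ?_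
    rw [interior_Icc] at ht
    rw [(h.2.hasDerivAt ht).deriv, neg_lt_zero]
    exact mul_pos hlam ((asymFlux_pos_iff hp one_pos one_pos).2 (h_pos t ht))
  exact fun s hs t ht hst => (strictMono_asymFlux hp ha hb).lt_iff_lt.1 (h_flux hs ht hst)

lemma sub_eq_nodalLength (h : IsStrongSol p a b ((p - 1) * κ ^ p) α β u u') (hp : 1 < p)
    (ha : 0 < a) (hb : 0 < b) (hκ : 0 < κ) (hαβ : α < β) (huα : u α = 0) (huβ : u β = 0)
    (h_pos : ∀ t ∈ Ioo α β, 0 < u t) : β - α = nodalLength p a b κ := by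
  have : 0 < p - 1 := by linarith
  obtain ⟨m, hm, hum'⟩ := exists_hasDerivAt_eq_zero hαβ h.1.continuousOn (huα.trans huβ.symm)
    (fun t ht => h.1.hasDerivAt ht)
  have h_anti := h.strictAntiOn_deriv hp ha hb (by positivity) h_pos
  have h_rise := (h.mono le_rfl hm.2.le).sub_eq_of_deriv_pos hp ha hb hκ hm.1 huα hum'
    fun t ht => hum' ▸ h_anti ⟨ht.1.le, (ht.2.trans hm.2).le⟩ (Ioo_subset_Icc_self hm) ht.2
  have h_fall := ((h.mono hm.1.le le_rfl).reflect 0).sub_eq_of_deriv_pos hp hb ha hκ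
    (by linarith [hm.2]) (by rwa [sub_sub_cancel]) (by rw [sub_sub_cancel, hum', neg_zero])
    fun t ht => neg_pos.2 (hum' ▸ h_anti (Ioo_subset_Icc_self hm)
      ⟨by linarith [ht.2, hm.1], by linarith [ht.1]⟩ (by linarith [ht.2]))
  rw [nodalLength, add_mul, add_div]
  linarith

lemma deriv_ne_zero (h : IsStrongSol p a b lam α β u u') (hp : 1 < p) (ha : 0 < a) (hb : 0 < b)
    (hlam : 0 < lam) {s t : ℝ} (hs : s ∈ Icc α β) (hus : u s = 0) (ht : t ∈ Icc α β)
    (hut : u t ≠ 0) : u' s ≠ 0 := by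
  intro hus'
  have hp0 : p ≠ 0 := by positivity
  have hp1 : 0 < p - 1 := by linarith
  have h_energy := h.energy_eq hp ha hb ht hs
  rw [hus, hus', asymE_zero hp0, abs_zero, Real.zero_rpow hp0, mul_zero, mul_zero, add_zero]
    at h_energy
  have h_kinetic := mul_nonneg hp1.le (asymE_nonneg p ha.le hb.le (u' t))
  have h_potential : 0 < lam * |u t| ^ p := by positivity
  linarith

lemma next_zero_of_deriv_pos (h : IsStrongSol p a b ((p - 1) * κ ^ p) α L u u') (hp : 1 < p)
    (ha : 0 < a) (hb : 0 < b) (hκ : 0 < κ) (hαL : α < L) (huα : u α = 0) (huL : u L = 0)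
    (huα' : 0 < u' α) :
    α + nodalLength p a b κ ≤ L ∧ u (α + nodalLength p a b κ) = 0 := by
  obtain ⟨β, hβ, huβ, h_pos⟩ := h.1.exists_first_zero hαL huα huα' huL.le
  rw [← (h.mono le_rfl hβ.2).sub_eq_nodalLength hp ha hb hκ hβ.1 huα huβ h_pos,
    add_sub_cancel]
  exact ⟨hβ.2, huβ⟩

lemma next_zero (h : IsStrongSol p a b ((p - 1) * κ ^ p) α L u u') (hp : 1 < p) (ha : 0 < a)
    (hb : 0 < b) (hκ : 0 < κ) (hαL : α < L) (huα : u α = 0) (huL : u L = 0) (huα' : u' α ≠ 0) :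
    α + nodalLength p a b κ ≤ L ∧ u (α + nodalLength p a b κ) = 0 := by
  rcases huα'.lt_or_gt with h_neg | h_pos
  · have h_next := h.neg.next_zero_of_deriv_pos hp hb ha hκ hαL (neg_eq_zero.2 huα)
      (neg_eq_zero.2 huL) (neg_pos.2 h_neg)
    rwa [nodalLength_comm, neg_eq_zero] at h_next
  · exact h.next_zero_of_deriv_pos hp ha hb hκ hαL huα huL h_pos

end IsStrongSol

lemma exists_eq_nat_mul_of_step {ℓ : ℝ} {P : ℝ → Prop} (hℓ : 0 < ℓ) (hL : 0 ≤ L) (h_zero : P 0)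
    (h_step : ∀ s, 0 ≤ s → s < L → P s → s + ℓ ≤ L ∧ P (s + ℓ)) : ∃ k : ℕ, L = k * ℓ := by
  by_contra! h_ne
  have h_all (k : ℕ) : (k : ℝ) * ℓ ≤ L ∧ P (k * ℓ) := by
    induction k with
    | zero => simpa only [Nat.cast_zero, zero_mul] using ⟨hL, h_zero⟩
    | succ k ih =>
      rw [Nat.cast_succ, add_one_mul]
      exact h_step _ (by positivity) (lt_of_le_of_ne ih.1 (h_ne k).symm) ih.2
  obtain ⟨k, hk⟩ := exists_nat_gt (L / ℓ)
  exact ((div_lt_iff₀ hℓ).1 hk).not_ge (h_all k).1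

lemma IsStrongSol.exists_eq_nat_mul_nodalLength
    (h : IsStrongSol p a b ((p - 1) * κ ^ p) 0 L u u') (hp : 1 < p) (ha : 0 < a) (hb : 0 < b)
    (hκ : 0 < κ) (hL : 0 ≤ L) (h_zero : u 0 = 0) (hL_zero : u L = 0)
    (h_ne : ∃ t ∈ Icc 0 L, u t ≠ 0) : ∃ k : ℕ, L = k * nodalLength p a b κ := by
  obtain ⟨t, ht, hut⟩ := h_ne
  have : 0 < p - 1 := by linarith
  exact exists_eq_nat_mul_of_step (P := fun s => u s = 0) (nodalLength_pos hp ha hb hκ) hL h_zero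
    fun s hs hsL hus => (h.mono hs le_rfl).next_zero hp ha hb hκ hsL hus hL_zero
      (h.deriv_ne_zero hp ha hb (by positivity) ⟨hs, hsL.le⟩ hus ht hut)

lemma isStrongSol_sinp (hp : 1 < p) (ha : 0 < a) (hκ : 0 < κ) :
    IsStrongSol p a b ((p - 1) * κ ^ p) 0 (a * halfPi p / κ) (fun t => sinp p (κ / a * t))
      (fun t => κ / a * cosp p (κ / a * t)) := by
  have h_scale : C1On 0 (a * halfPi p / κ) (fun t => κ / a * t) (fun _ => κ / a) :=
    ⟨fun t _ => ((hasDerivAt_id t).const_mul (κ / a)).hasDerivWithinAt.congr_deriv (mul_one _),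
      continuousOn_const⟩
  have h_maps : MapsTo (fun t => κ / a * t) (Icc 0 (a * halfPi p / κ)) (Icc 0 (halfPi p)) := by
    intro t ht
    refine ⟨mul_nonneg (by positivity) ht.1, ?_⟩
    have h_le := (le_div_iff₀ hκ).1 ht.2
    beta_reduce
    rw [div_mul_eq_mul_div, div_le_iff₀ ha]
    linarith
  have h_pow : a ^ p * (κ / a) ^ (p - 1) * (κ / a) = κ ^ p := by
    have : a ^ p ≠ 0 := by positivity
    rw [mul_assoc, ← Real.rpow_add_one (by positivity), sub_add_cancel,
      Real.div_rpow hκ.le ha.le, mul_div_cancel₀ _ this]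
  refine ⟨((c1On_sinp hp).comp h_scale h_maps).congr (fun _ _ => rfl) (fun _ _ => mul_comm _ _),
    (((c1On_cosp_rpow hp).comp h_scale h_maps).const_mul (a ^ p * (κ / a) ^ (p - 1))).congr
      (fun t ht => ?_) (fun t ht => ?_)⟩
  · have h_nonneg := cosp_nonneg hp (h_maps ht)
    rw [asymFlux_of_nonneg hp.ne' (by positivity), Real.mul_rpow (by positivity) h_nonneg]
    exact (mul_assoc _ _ _).symm
  · have h_nonneg : 0 ≤ sinp p (κ / a * t) := by
      simpa only [sinp_zero hp] using (strictMono_sinp hp).monotone (h_maps ht).1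
    rw [asymFlux_of_nonneg hp.ne' h_nonneg, Real.one_rpow, one_mul, ← h_pow]
    ring

lemma exists_isStrongSol_pos (hp : 1 < p) (ha : 0 < a) (hb : 0 < b) (hκ : 0 < κ) :
    ∃ u u' : ℝ → ℝ, IsStrongSol p a b ((p - 1) * κ ^ p) 0 (nodalLength p a b κ) u u' ∧
      u 0 = 0 ∧ u' 0 = κ / a ∧ u (nodalLength p a b κ) = 0 ∧
      u' (nodalLength p a b κ) = -(κ / b) ∧ ∀ t ∈ Ioo 0 (nodalLength p a b κ), 0 < u t := by
  have h_halfPi := halfPi_pos hp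
  have h_sum : nodalLength p a b κ = a * halfPi p / κ + b * halfPi p / κ := by
    rw [nodalLength, add_mul, add_div]
  have h_rise_pos : 0 < a * halfPi p / κ := by positivity
  have h_fall_pos : 0 < b * halfPi p / κ := by positivity
  have h_peak {c : ℝ} (hc : 0 < c) : κ / c * (c * halfPi p / κ) = halfPi p := by field_simp
  have h_fall := (isStrongSol_sinp (b := a) hp hb hκ).reflect (nodalLength p a b κ)
  have h_not_le : ¬nodalLength p a b κ ≤ a * halfPi p / κ := by linarith
  rw [sub_zero, h_sum, add_sub_cancel_right, ← h_sum] at h_fall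
  refine ⟨_, _, (isStrongSol_sinp hp ha hκ).glue h_rise_pos.le (by linarith) h_fall ?_ ?_,
    ?_, ?_, ?_, ?_, fun t ht => ?_⟩
  · rw [h_sum, add_sub_cancel_left, h_peak ha, h_peak hb]
  · rw [h_sum, add_sub_cancel_left, h_peak ha, h_peak hb, cosp_halfPi hp, mul_zero, mul_zero,
      neg_zero]
  · rw [if_pos h_rise_pos.le, mul_zero, sinp_zero hp]
  · rw [if_pos h_rise_pos.le, mul_zero, cosp_zero hp, mul_one]
  · rw [if_neg h_not_le, sub_self, mul_zero, sinp_zero hp]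
  · rw [if_neg h_not_le, sub_self, mul_zero, cosp_zero hp, mul_one]
  · have h_fall_arg : 0 < nodalLength p a b κ - t := sub_pos.2 ht.2
    have h_rise_arg : 0 < t := ht.1
    split_ifs <;> exact sinp_pos hp (by positivity)

lemma exists_isStrongSol_nat_mul_nodalLength (hp : 1 < p) (ha : 0 < a) (hb : 0 < b) (hκ : 0 < κ)
    (k : ℕ) :
    ∃ u u' : ℝ → ℝ, IsStrongSol p a b ((p - 1) * κ ^ p) 0 (k * nodalLength p a b κ) u u' ∧
      u 0 = 0 ∧ u' 0 = κ / a ∧ u (k * nodalLength p a b κ) = 0 := by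
  induction k generalizing a b with
  | zero =>
    obtain ⟨u, u', hu, hu0, hu0', -⟩ := exists_isStrongSol_pos hp ha hb hκ
    rw [Nat.cast_zero, zero_mul]
    exact ⟨u, u', hu.mono le_rfl (nodalLength_pos hp ha hb hκ).le, hu0, hu0', hu0⟩
  | succ k ih =>
    have hℓ := nodalLength_pos hp ha hb hκ
    obtain ⟨u, u', hu, hu0, hu0', huℓ, huℓ', -⟩ := exists_isStrongSol_pos hp ha hb hκ
    obtain ⟨v, v', hv, hv0, hv0', hvℓ⟩ := ih hb ha
    rw [nodalLength_comm] at hv hvℓ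
    have h_tail := hv.neg.shift (nodalLength p a b κ)
    have h_len : (0 : ℝ) ≤ k * nodalLength p a b κ := by positivity
    rw [zero_add, ← add_one_mul, ← Nat.cast_succ] at h_tail
    have h_end : ((k + 1 : ℕ) : ℝ) * nodalLength p a b κ - nodalLength p a b κ =
        k * nodalLength p a b κ := by
      rw [Nat.cast_succ]
      ring
    refine ⟨_, _, hu.glue hℓ.le (by linarith) h_tail ?_ ?_, ?_, ?_, ?_⟩
    · rw [sub_self, hv0, neg_zero, huℓ]
    · rw [sub_self, hv0', huℓ']
    · rw [if_pos hℓ.le, hu0]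
    · rw [if_pos hℓ.le, hu0']
    · split_ifs with h_le
      · rwa [le_antisymm h_le (by linarith)]
      · rw [h_end, hvℓ, neg_zero]

end Waves

section Picone

variable {p a b κ lam α β L : ℝ} {u u' v v' w w' z z' : ℝ → ℝ}

lemma IsStrongSol.c1On_asymFlux_div (h : IsStrongSol p a b lam α β v v') (hp : 1 < p)
    (h_pos : ∀ t ∈ Icc α β, 0 < v t) :
    C1On α β (fun t => asymFlux p a b (v' t / v t))
      (fun t => -(lam + (p - 1) * asymE p a b (v' t / v t))) := by
  refine ⟨fun t ht => ?_, ((((continuous_asymE hp a b).comp_continuousOn (h.1.2.div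
    h.1.continuousOn fun t ht => (h_pos t ht).ne')).const_smul (p - 1)).const_add lam).neg⟩
  have flux_div (s : ℝ) (hs : s ∈ Icc α β) :
      asymFlux p a b (v' s / v s) = v s ^ (1 - p) * asymFlux p a b (v' s) := by
    have hv := (h_pos s hs).le
    rw [div_eq_inv_mul, asymFlux_const_mul p a b (inv_nonneg.2 hv), Real.inv_rpow hv,
      ← Real.rpow_neg hv, neg_sub]
  have hv := h_pos t ht
  refine ((((h.1.1 t ht).rpow_const (.inl hv.ne')).mul (h.2.1 t ht)).congr flux_div
    (flux_div t ht)).congr_deriv ?_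
  have h_source : v t ^ (1 - p) * asymFlux p 1 1 (v t) = 1 := by
    rw [asymFlux_of_nonneg hp.ne' hv.le, Real.one_rpow, one_mul, ← Real.rpow_add hv,
      sub_add_sub_cancel, sub_self, Real.rpow_zero]
  have h_energy : asymE p a b (v' t / v t) =
      v t ^ (1 - p - 1) * (asymFlux p a b (v' t) * v' t) := by
    rw [asymFlux_mul_self hp, div_eq_inv_mul, asymE_const_mul p a b (inv_nonneg.2 hv.le),
      Real.inv_rpow hv.le, ← Real.rpow_neg hv.le, sub_sub_cancel_left]
  beta_reduce
  rw [h_energy]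
  linear_combination -lam * h_source

lemma C1On.mul_max_zero_rpow (hw : C1On α β w w') (hu : C1On α β u u') (hp : 1 < p) :
    C1On α β (fun t => w t * max (u t) 0 ^ p)
      (fun t => w' t * max (u t) 0 ^ p + w t * (p * max (u t) 0 ^ (p - 1) * u' t)) :=
  hw.mul (hu.hasDerivAt_comp (hasDerivAt_max_zero_rpow hp)
    (continuous_const.mul ((continuous_id.max continuous_const).rpow_const
      fun _ => .inr (by linarith))))

lemma picone_le (hp : 1 < p) (ha : 0 ≤ a) (hb : 0 ≤ b) (s x y z : ℝ) :
    (-(lam + (p - 1) * asymE p a b y) * max s 0 ^ p +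
        asymFlux p a b y * (p * max s 0 ^ (p - 1) * x)) +
      (-(lam + (p - 1) * asymE p b a z) * max (-s) 0 ^ p +
        asymFlux p b a z * (p * max (-s) 0 ^ (p - 1) * -x)) ≤
      asymE p a b x - lam * |s| ^ p := by
  wlog hs : 0 ≤ s generalizing a b s x y z
  · have h := this hb ha (-s) (-x) z y (by linarith)
    rwa [neg_neg, neg_neg, asymE_neg, abs_neg, add_comm] at h
  have h_young := mul_asymFlux_mul_rpow_le hp ha hb hs x y
  rw [max_eq_left hs, max_eq_right (neg_nonpos.2 hs), abs_of_nonneg hs,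
    Real.zero_rpow (by linarith : p ≠ 0), Real.zero_rpow (sub_ne_zero.2 hp.ne')]
  linarith

-- Since `u` may change sign, the comparison uses a positive `(a, b)`-solution where `u > 0` and a
-- positive `(b, a)`-solution where `u < 0`.
lemma IsStrongSol.mul_integral_rpow_le (hv : IsStrongSol p a b lam 0 L v v')
    (hv_pos : ∀ t ∈ Icc 0 L, 0 < v t) (hz : IsStrongSol p b a lam 0 L z z')
    (hz_pos : ∀ t ∈ Icc 0 L, 0 < z t) (hp : 1 < p) (ha : 0 ≤ a) (hb : 0 ≤ b) (hL : 0 ≤ L)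
    (hu : Adm L u u') :
    lam * ∫ t in (0 : ℝ)..L, |u t| ^ p ≤ ∫ t in (0 : ℝ)..L, asymE p a b (u' t) := by
  obtain ⟨hu, hu0, huL⟩ := hu
  have hp0 : p ≠ 0 := by positivity
  have h_picone := ((hv.c1On_asymFlux_div hp hv_pos).mul_max_zero_rpow hu hp).add
    ((hz.c1On_asymFlux_div hp hz_pos).mul_max_zero_rpow hu.neg hp)
  have h_energy : IntervalIntegrable (fun t => asymE p a b (u' t)) MeasureTheory.volume 0 L :=
    ((continuous_asymE hp a b).comp_continuousOn hu.2).intervalIntegrable_of_Icc hL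
  have h_mass : IntervalIntegrable (fun t => lam * |u t| ^ p) MeasureTheory.volume 0 L :=
    (continuousOn_const.mul (hu.continuousOn.abs.rpow_const
      fun _ _ => .inr (by linarith))).intervalIntegrable_of_Icc hL
  have h_le := intervalIntegral.integral_mono_on hL (h_picone.2.intervalIntegrable_of_Icc hL)
    (h_energy.sub h_mass) fun t _ => picone_le hp ha hb (u t) (u' t) (v' t / v t) (z' t / z t)
  rw [h_picone.integral_eq hL, intervalIntegral.integral_sub h_energy h_mass,
    intervalIntegral.integral_const_mul, hu0, huL, neg_zero, max_self, Real.zero_rpow hp0] at h_le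
  linarith

lemma exists_isStrongSol_pos_on_Icc (hp : 1 < p) (ha : 0 < a) (hb : 0 < b) (hκ : 0 < κ)
    (hL : L < nodalLength p a b κ) : ∃ v v' : ℝ → ℝ,
      IsStrongSol p a b ((p - 1) * κ ^ p) 0 L v v' ∧ ∀ t ∈ Icc 0 L, 0 < v t := by
  obtain ⟨v, v', hv, -, -, -, -, hv_pos⟩ := exists_isStrongSol_pos hp ha hb hκ
  exact ⟨_, _, (hv.shift (-((nodalLength p a b κ - L) / 2))).mono (by linarith) (by linarith),
    fun t ht => hv_pos _ ⟨by linarith [ht.1], by linarith [ht.2]⟩⟩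

lemma mul_integral_rpow_le_of_le_nodalLength (hp : 1 < p) (ha : 0 < a) (hb : 0 < b) (hκ : 0 < κ)
    (hL : 0 ≤ L) (hLκ : L ≤ nodalLength p a b κ) (hu : Adm L u u') :
    (p - 1) * κ ^ p * ∫ t in (0 : ℝ)..L, |u t| ^ p ≤ ∫ t in (0 : ℝ)..L, asymE p a b (u' t) := by
  have h_subcritical : ∀ μ ∈ Ioo 0 κ, (p - 1) * μ ^ p * ∫ t in (0 : ℝ)..L, |u t| ^ p ≤
      ∫ t in (0 : ℝ)..L, asymE p a b (u' t) := by
    intro μ hμ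
    have hLμ : L < nodalLength p a b μ := hLκ.trans_lt (nodalLength_lt hp ha hb hμ.1 hμ.2)
    obtain ⟨v, v', hv, hv_pos⟩ := exists_isStrongSol_pos_on_Icc hp ha hb hμ.1 hLμ
    obtain ⟨z, z', hz, hz_pos⟩ :=
      exists_isStrongSol_pos_on_Icc hp hb ha hμ.1 (nodalLength_comm p a b μ ▸ hLμ)
    exact hv.mul_integral_rpow_le hv_pos hz hz_pos hp ha.le hb.le hL hu
  have h_cont : Continuous fun μ : ℝ => (p - 1) * μ ^ p * ∫ t in (0 : ℝ)..L, |u t| ^ p :=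
    (continuous_const.mul (Real.continuous_rpow_const (by linarith))).mul continuous_const
  refine le_of_tendsto (h_cont.continuousWithinAt (s := Iio κ) (x := κ)).tendsto ?_
  filter_upwards [Ioo_mem_nhdsLT hκ] with μ hμ using h_subcritical μ hμ

end Picone

section Spectrum

variable {p a b κ lam L : ℝ} {u u' : ℝ → ℝ}

lemma integral_abs_rpow_pos (hp : 0 ≤ p) (hL : 0 < L) (hu : ContinuousOn u (Icc 0 L))
    (h_ne : ∃ t ∈ Icc 0 L, u t ≠ 0) : 0 < ∫ t in (0 : ℝ)..L, |u t| ^ p := by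
  obtain ⟨t, ht, hut⟩ := h_ne
  exact intervalIntegral.integral_pos hL (hu.abs.rpow_const fun _ _ => .inr hp)
    (fun _ _ => by positivity) ⟨t, ht, by positivity⟩

lemma lam1_nodalLength (hp : 1 < p) (ha : 0 < a) (hb : 0 < b) (hκ : 0 < κ) :
    lam1 p a b (nodalLength p a b κ) = (p - 1) * κ ^ p := by
  have hℓ := nodalLength_pos hp ha hb hκ
  refine IsLeast.csInf_eq ⟨?_, ?_⟩
  · obtain ⟨u, u', hu, hu0, hu0', huℓ, -⟩ := exists_isStrongSol_pos hp ha hb hκ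
    have h_mass := integral_abs_rpow_pos (by linarith : 0 ≤ p) hℓ hu.1.continuousOn
      (hu.1.exists_ne_zero hℓ (by rw [hu0']; positivity))
    have h_energy := hu.integral_asymE_deriv hp hℓ.le hu0 huℓ
    obtain ⟨c, hc, hcp⟩ : ∃ c > 0, c ^ p * ∫ t in (0 : ℝ)..nodalLength p a b κ, |u t| ^ p = 1 :=
      ⟨(∫ t in (0 : ℝ)..nodalLength p a b κ, |u t| ^ p)⁻¹ ^ p⁻¹, by positivity, by
        rw [Real.rpow_inv_rpow (by positivity) (by linarith), inv_mul_cancel₀ h_mass.ne']⟩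
    refine ⟨_, _, ⟨hu.1.const_mul c, ?_, ?_⟩, ?_, ?_⟩
    · rw [hu0, mul_zero]
    · rw [huℓ, mul_zero]
    · simp_rw [abs_mul, Real.mul_rpow (abs_nonneg c) (abs_nonneg _), abs_of_pos hc]
      rw [intervalIntegral.integral_const_mul, hcp]
    · simp_rw [asymE_const_mul p a b hc.le]
      rw [intervalIntegral.integral_const_mul, h_energy, mul_left_comm, hcp, mul_one]
  · rintro _ ⟨u, u', hu, h_mass, rfl⟩
    simpa only [h_mass, mul_one] using
      mul_integral_rpow_le_of_le_nodalLength hp ha hb hκ hℓ.le le_rfl hu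

lemma IsStrongSol.lam_pos (h : IsStrongSol p a b lam 0 L u u') (hp : 1 < p) (ha : 0 < a)
    (hb : 0 < b) (hL : 0 < L) (hu0 : u 0 = 0) (huL : u L = 0) (h_ne : ∃ t ∈ Icc 0 L, u t ≠ 0) :
    0 < lam := by
  obtain ⟨κ, hκ, hκL⟩ := exists_nodalLength_eq hp ha hb hL
  have h_mass := integral_abs_rpow_pos (by linarith : 0 ≤ p) hL h.1.continuousOn h_ne
  have h_le := mul_integral_rpow_le_of_le_nodalLength hp ha hb hκ hL.le hκL.ge ⟨h.1, hu0, huL⟩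
  rw [h.integral_asymE_deriv hp hL.le hu0 huL] at h_le
  have : 0 < p - 1 := by linarith
  exact (by positivity : 0 < (p - 1) * κ ^ p).trans_le (le_of_mul_le_mul_right h_le h_mass)

lemma dirichletEig_mul_rpow_iff (hp : 1 < p) (ha : 0 < a) (hb : 0 < b) (hκ : 0 < κ) (hL : 0 < L) :
    DirichletEig p a b L ((p - 1) * κ ^ p) ↔ ∃ k : ℕ, 0 < k ∧ L = k * nodalLength p a b κ := by
  rw [dirichletEig_iff_exists_isStrongSol hp hL]
  refine ⟨fun ⟨u, u', hu, hu0, huL, h_ne⟩ => ?_, ?_⟩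
  · obtain ⟨k, rfl⟩ := hu.exists_eq_nat_mul_nodalLength hp ha hb hκ hL.le hu0 huL h_ne
    exact ⟨k, Nat.cast_pos.1 (pos_of_mul_pos_left hL (nodalLength_pos hp ha hb hκ).le), rfl⟩
  · rintro ⟨k, -, rfl⟩
    obtain ⟨u, u', hu, hu0, hu0', huL⟩ := exists_isStrongSol_nat_mul_nodalLength hp ha hb hκ k
    exact ⟨u, u', hu, hu0, huL, hu.1.exists_ne_zero hL (by rw [hu0']; positivity)⟩

lemma dirichletEig_nodalLength_iff (hp : 1 < p) (ha : 0 < a) (hb : 0 < b) (hκ : 0 < κ) :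
    DirichletEig p a b (nodalLength p a b κ) lam ↔
      ∃ k : ℕ, 0 < k ∧ lam = k ^ p * ((p - 1) * κ ^ p) := by
  have hp1 : 0 < p - 1 := by linarith
  have hℓ := nodalLength_pos hp ha hb hκ
  have factor (k : ℕ) : (k : ℝ) ^ p * ((p - 1) * κ ^ p) = (p - 1) * (k * κ) ^ p := by
    rw [Real.mul_rpow k.cast_nonneg hκ.le, mul_left_comm]
  refine ⟨fun h => ?_, ?_⟩
  · obtain ⟨u, u', hu, hu0, huL, h_ne⟩ := (dirichletEig_iff_exists_isStrongSol hp hℓ).1 h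
    have hlam := hu.lam_pos hp ha hb hℓ hu0 huL h_ne
    obtain ⟨μ, hμ, rfl⟩ : ∃ μ > 0, lam = (p - 1) * μ ^ p :=
      ⟨(lam / (p - 1)) ^ p⁻¹, by positivity, by
        rw [Real.rpow_inv_rpow (by positivity) (by linarith), mul_div_cancel₀ _ hp1.ne']⟩
    obtain ⟨k, hk, h_len⟩ := (dirichletEig_mul_rpow_iff hp ha hb hμ hℓ).1 h
    rw [nodalLength_eq_mul_nodalLength_iff hp ha hb hκ hμ] at h_len
    exact ⟨k, hk, by rw [factor, h_len]⟩
  · rintro ⟨k, hk, rfl⟩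
    rw [factor, dirichletEig_mul_rpow_iff hp ha hb (by positivity) hℓ]
    exact ⟨k, hk, (nodalLength_eq_mul_nodalLength_iff hp ha hb hκ (by positivity)).2 rfl⟩

lemma dirichletEig_iff (hp : 1 < p) (ha : 0 < a) (hb : 0 < b) (hL : 0 < L) :
    DirichletEig p a b L lam ↔ ∃ k : ℕ, 0 < k ∧ lam = k ^ p * lam1 p a b L := by
  obtain ⟨κ, hκ, rfl⟩ := exists_nodalLength_eq hp ha hb hL
  rw [dirichletEig_nodalLength_iff hp ha hb hκ, lam1_nodalLength hp ha hb hκ]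

lemma lam1_one_one (hp : 1 < p) (ha : 0 < a) (hb : 0 < b) (hL : 0 < L) :
    lam1 p 1 1 L = (2 / (a + b)) ^ p * lam1 p a b L := by
  obtain ⟨κ, hκ, rfl⟩ := exists_nodalLength_eq hp ha hb hL
  have h_len : nodalLength p 1 1 (2 / (a + b) * κ) = nodalLength p a b κ := by
    unfold nodalLength
    field_simp
    ring
  rw [lam1_nodalLength hp ha hb hκ, ← h_len, lam1_nodalLength hp one_pos one_pos (by positivity),
    Real.mul_rpow (by positivity) hκ.le, mul_left_comm]

end Spectrum

theorem stmt17 (p a b L : ℝ) (hp : 1 < p) (ha : 0 < a) (hb : 0 < b) (hL : 0 < L)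
    (lam : ℝ) :
    (DirichletEig p a b L lam ↔ ∃ k : ℕ, 0 < k ∧ lam = (k : ℝ) ^ p * lam1 p a b L) ∧
    (DirichletEig p a b L lam ↔ DirichletEig p 1 1 L ((2 / (a + b)) ^ p * lam)) := by
  refine ⟨dirichletEig_iff hp ha hb hL, ?_⟩
  rw [dirichletEig_iff hp ha hb hL, dirichletEig_iff hp one_pos one_pos hL,
    lam1_one_one hp ha hb hL]
  have h_ratio : (2 / (a + b)) ^ p ≠ 0 := by positivity
  simp_rw [mul_left_comm _ ((2 / (a + b)) ^ p), mul_right_inj' h_ratio]
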